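/- arXiv:1008.2074 — 2 statements merged into one kernel-verified Lean document; each statement's English description precedes it below -/
import Mathlib

section
/- Let I = Q ∩ J be an ideal of a commutative Noetherian ring R such that √I = P is prime, Q is P-primary, and P ⊆ √J with √J ≠ P (so J has strictly larger height). If h ∈ R satisfies h ∉ P and h ∈ √J, then the saturation I : h^∞ equals Q. -/
/-- The saturation `I : h^∞ = ⋃ k, (I : h^k)`. -/
def Ideal.sat {R : Type*} [CommRing R] (I : Ideal R) (h : R) : Ideal R :=
  ⨆ k : ℕ, I.colon (Ideal.span {h ^ k})

theorem stmt_10 {R : Type*} [CommRing R] [IsNoetherianRing R]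
    (I Q J P : Ideal R) (hI : I = Q ⊓ J) (hP : P.IsPrime)
    (hrad : I.radical = P) (hQ : Q.IsPrimary) (hQrad : Q.radical = P)
    (hPJ : P ≤ J.radical) (hJP : J.radical ≠ P)
    (h : R) (hh1 : h ∉ P) (hh2 : h ∈ J.radical) :
    I.sat h = Q := by
  subst hI
  apply le_antisymm
  · refine iSup_le fun k x hx => ?_
    have h1 : x * h ^ k ∈ Q ⊓ J :=
      Submodule.mem_colon.mp hx (h ^ k) (Ideal.subset_span rfl)
    rcases (Ideal.isPrimary_iff.mp hQ).2 h1.1 with h2 | h2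
    · exact h2
    · rw [hQrad] at h2
      exact absurd (hP.mem_of_pow_mem k h2) hh1
  · intro x hx
    obtain ⟨k, hk⟩ := hh2
    refine Submodule.mem_iSup_of_mem k (Submodule.mem_colon.mpr fun p hp => ?_)
    obtain ⟨a, rfl⟩ := Ideal.mem_span_singleton'.mp hp
    exact ⟨Q.mul_mem_right _ hx, J.mul_mem_left _ (J.mul_mem_left _ hk)⟩
end

section
/- Let I ⊆ ℤ[x₁,…,xₙ] be an ideal with I ∩ ℤ = ⟨0⟩, and let h be a nonzero integer such that I : h^∞ = I : h^m for some natural number m. Then I = (I : h^m) ∩ ⟨I, h^m⟩. -/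
open MvPolynomial

theorem stmt_12 (n : ℕ) (I : Ideal (MvPolynomial (Fin n) ℤ))
    (hI : ∀ a : ℤ, (C a : MvPolynomial (Fin n) ℤ) ∈ I → a = 0)
    (h : ℤ) (hh : h ≠ 0) (m : ℕ)
    (hsat : I.sat (C h) = I.colon (Ideal.span {(C h : MvPolynomial (Fin n) ℤ) ^ m})) :
    I = I.colon (Ideal.span {(C h : MvPolynomial (Fin n) ℤ) ^ m}) ⊓
          (I ⊔ Ideal.span {(C h : MvPolynomial (Fin n) ℤ) ^ m}) := by
  have key : ∀ (k : ℕ) (f : MvPolynomial (Fin n) ℤ),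
      f ∈ I.colon (Ideal.span {(C h : MvPolynomial (Fin n) ℤ) ^ k}) ↔ f * C h ^ k ∈ I := by
    intro k f
    rw [Submodule.mem_colon]
    constructor
    · intro hf
      exact hf _ (Ideal.mem_span_singleton_self _)
    · intro hf p hp
      obtain ⟨q, rfl⟩ := Ideal.mem_span_singleton'.1 hp
      have := I.mul_mem_left q hf
      rw [smul_eq_mul]
      convert this using 1
      ring
  apply le_antisymm
  · intro f hf
    exact ⟨(key m f).2 (I.mul_mem_right _ hf), Ideal.mem_sup_left hf⟩
  · rintro f ⟨hf1, hf2⟩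
    have hf1' := (key m f).1 hf1
    obtain ⟨g, hg, p, hp, rfl⟩ := Submodule.mem_sup.1 hf2
    obtain ⟨q, rfl⟩ := Ideal.mem_span_singleton'.1 hp
    have h2 : q * C h ^ (m + m) ∈ I := by
      have := I.sub_mem hf1' (I.mul_mem_right (C h ^ m) hg)
      convert this using 1
      ring
    have h3 : q ∈ I.sat (C h) :=
      (le_iSup (fun k : ℕ => I.colon (Ideal.span {(C h : MvPolynomial (Fin n) ℤ) ^ k})) (m + m))
        ((key _ _).2 h2)
    rw [hsat] at h3
    exact I.add_mem hg ((key _ _).1 h3)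
end
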